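/- Let m ≥ 2, let α₁,…,α_{m−1}, β₁,…,β_m be real numbers, let 0 < η₁ < η₂ < … < η_m ≤ 1, set μ = 1 − (∑_{i=1}^{m−1} αᵢ(η_{i+1} − ηᵢ) + ∑_{i=1}^{m} βᵢ), and assume μ ≠ 0. Let f : [0,1] × ℝ → ℝ be continuous and suppose there exists L > 0 such that |f(t,u₁) − f(t,u₂)| ≤ L|u₁ − u₂| for all t ∈ [0,1] and u₁, u₂ ∈ ℝ. Let p > 1 and set Φ = (∫₀¹ |G(1,s)|ᵖ ds)^{1/p} + (1/|μ|) ∑_{i=1}^{m−1} |αᵢ| (∫₀¹ |∫_{ηᵢ}^{η_{i+1}} G(τ,s) dτ|ᵖ ds)^{1/p} + (1/|μ|) ∑_{i=1}^{m} |βᵢ| (∫₀¹ |G(ηᵢ,s)|ᵖ ds)^{1/p}. If L·Φ < 1, then there exists exactly one six times continuously differentiable function u : [0,1] → ℝ satisfying u⁽⁶⁾(t) + f(t,u(t)) = 0 for all t ∈ (0,1), u′(0) = u″(0) = u‴(0) = u⁽⁴⁾(0) = 0, u″(1) = 0, and u(0) = ∑_{i=1}^{m−1} αᵢ ∫_{ηᵢ}^{η_{i+1}}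 u(s) ds + ∑_{i=1}^{m} βᵢ u(ηᵢ). -/

import Mathlib

open Set intervalIntegral

/-- Green's function `G(t,s)` for the sixth-order problem. -/
noncomputable def G (t s : ℝ) : ℝ :=
  if s ≤ t then (t ^ 5 * (1 - s) ^ 3 - (t - s) ^ 5) / 120
  else t ^ 5 * (1 - s) ^ 3 / 120

/-!
Taylor's formula with integral remainder shows that `u⁽⁶⁾ + h = 0`, together with the homogeneous
conditions at `0` and `1`, means `u = u(0) + ∫₀¹ G(·, s) h(s) ds`. The nonlocal problem is therefore
the equation `w = ℓ(w) • 1 + A (F w)` in `C[0, 1]`, where `A` is the integral operator with kernel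
`G`, `F` is the superposition operator of `f` and `ℓ` is the multipoint functional. Applying `ℓ`
gives `(1 - ℓ(1)) ℓ(w) = ℓ(A (F w))` with `1 - ℓ(1) = μ ≠ 0`, so `ℓ(w)` can be eliminated from the
right-hand side, which becomes a contraction for the sup norm: since `0 ≤ G(t, s) ≤ G(1, s)`, the
`Lᵖ` norms in `Φ` bound the operator norms of `A` and of the terms of `ℓ ∘ A`.
-/

open MeasureTheory
open scoped NNReal unitInterval Nat

section BanachSpace

variable {E V : Type*} [NormedAddCommGroup E] [NormedSpace ℝ E] [NormedAddCommGroup V]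
  [NormedSpace ℝ V]

lemma eq_smul_add_iff {ℓ : E →L[ℝ] ℝ} {e : E} (hℓ : ℓ e ≠ 1) (w x : E) :
    w = ℓ w • e + x ↔ w = (ℓ x / (1 - ℓ e)) • e + x := by
  have hne : 1 - ℓ e ≠ 0 := sub_ne_zero.2 hℓ.symm
  constructor <;> intro h
  · have hw : ℓ w = ℓ w * ℓ e + ℓ x := by simpa using congrArg ℓ h
    rwa [show ℓ w = ℓ x / (1 - ℓ e) by rw [eq_div_iff hne]; linarith] at h
  · have hw : ℓ w = ℓ x / (1 - ℓ e) * ℓ e + ℓ x := by simpa using congrArg ℓ h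
    rwa [show ℓ x / (1 - ℓ e) = ℓ w by rw [hw]; field_simp; ring] at h

lemma existsUnique_eq_smul_add [CompleteSpace E] {ℓ : E →L[ℝ] ℝ} {e : E} (hℓ : ℓ e ≠ 1)
    (A : V →L[ℝ] E) {F : E → V} {L : ℝ≥0} (hF : LipschitzWith L F)
    (hL : L * (‖A‖ + ‖ℓ.comp A‖ / |1 - ℓ e| * ‖e‖) < 1) :
    ∃! w, w = ℓ w • e + A (F w) := by
  let K : V →L[ℝ] E := ((1 - ℓ e)⁻¹ • ℓ.comp A).smulRight e + A
  have hK : ‖K‖ * L < 1 := by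
    refine lt_of_le_of_lt ?_ hL
    rw [mul_comm]
    gcongr
    refine (norm_add_le _ _).trans_eq ?_
    rw [ContinuousLinearMap.norm_smulRight_apply, norm_smul, norm_inv, Real.norm_eq_abs]
    ring
  have hcontr : ContractingWith (‖K‖₊ * L) (K ∘ F) := ⟨mod_cast hK, K.lipschitz.comp hF⟩
  have hfix : ∀ w, w = ℓ w • e + A (F w) ↔ Function.IsFixedPt (K ∘ F) w := fun w => by
    rw [eq_smul_add_iff hℓ, eq_comm]
    simp [K, Function.IsFixedPt, div_eq_inv_mul]
  simp only [hfix]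
  exact ⟨_, hcontr.fixedPoint_isFixedPt, fun w hw => hcontr.fixedPoint_unique hw⟩

lemma norm_sum_add_sum_comp_le {ι κ : Type*} (S : Finset ι) (T : Finset κ) (α : ι → ℝ) (β : κ → ℝ)
    (ℓ : ι → E →L[ℝ] ℝ) (ℓ' : κ → E →L[ℝ] ℝ) (A : V →L[ℝ] E) :
    ‖(∑ i ∈ S, α i • ℓ i + ∑ j ∈ T, β j • ℓ' j).comp A‖ ≤
      ∑ i ∈ S, |α i| * ‖(ℓ i).comp A‖ + ∑ j ∈ T, |β j| * ‖(ℓ' j).comp A‖ := by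
  simp only [ContinuousLinearMap.add_comp, ContinuousLinearMap.finsetSum_comp,
    ContinuousLinearMap.smul_comp]
  exact norm_add_le_of_le (norm_sum_le_of_le S fun i _ => (norm_smul _ _).le)
    (norm_sum_le_of_le T fun j _ => (norm_smul _ _).le)

end BanachSpace

section Superposition

variable {X E V : Type*} [TopologicalSpace X]

/-- The superposition (Nemytskii) operator `w ↦ (x ↦ g (x, w x))` induced by `g`. -/
def superposition [TopologicalSpace E] [TopologicalSpace V] (g : C(X × E, V)) (w : C(X, E)) :
    C(X, V) :=
  g.comp ((ContinuousMap.id X).prodMk w)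

lemma lipschitzWith_superposition [CompactSpace X] [PseudoMetricSpace E] [PseudoMetricSpace V]
    {g : C(X × E, V)} {L : ℝ≥0} (hg : ∀ x, LipschitzWith L fun y => g (x, y)) :
    LipschitzWith L (superposition g) :=
  LipschitzWith.of_dist_le_mul fun w₁ w₂ => (ContinuousMap.dist_le (by positivity)).2 fun x =>
    ((hg x).dist_le_mul _ _).trans <| by gcongr; exact ContinuousMap.dist_apply_le_dist x

end Superposition

section KernelOperator

variable {Y E F : Type*} [TopologicalSpace Y] [CompactSpace Y] [MeasurableSpace Y] [BorelSpace Y]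
  [NormedAddCommGroup E]

lemma memLp_continuousMap (μ : Measure Y) [IsFiniteMeasure μ] (p : ENNReal) (k : C(Y, E)) :
    MemLp k p μ :=
  k.continuous.memLp_of_hasCompactSupport (HasCompactSupport.of_compactSpace k)

lemma integrable_continuousMap (μ : Measure Y) [IsFiniteMeasure μ] (k : C(Y, E)) :
    Integrable k μ :=
  memLp_one_iff_integrable.1 (memLp_continuousMap μ 1 k)

lemma integral_norm_le_rpow_integral_norm_rpow (μ : Measure Y) [IsProbabilityMeasure μ]
    (k : C(Y, E)) {p : ℝ} (hp : 1 ≤ p) :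
    ∫ y, ‖k y‖ ∂μ ≤ (∫ y, ‖k y‖ ^ p ∂μ) ^ (1 / p) := by
  have hp₀ : 0 < p := one_pos.trans_le hp
  have hk := memLp_continuousMap μ (ENNReal.ofReal p) k
  have hle : lpNorm k 1 μ ≤ lpNorm k (ENNReal.ofReal p) μ := by
    rw [← toReal_eLpNorm hk.1, ← toReal_eLpNorm hk.1]
    exact ENNReal.toReal_mono hk.eLpNorm_ne_top
      (eLpNorm_le_eLpNorm_of_exponent_le (ENNReal.one_le_ofReal.2 hp) hk.1)
  rwa [lpNorm_one_eq_integral_norm hk.1, lpNorm_eq_integral_norm_rpow_toReal (by simpa using hp₀)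
    ENNReal.ofReal_ne_top hk.1, ENNReal.toReal_ofReal hp₀.le, ← one_div] at hle

variable [NormedSpace ℝ E] [NormedAddCommGroup F] [NormedSpace ℝ F]

lemma norm_integral_smul_le (μ : Measure Y) [IsFiniteMeasure μ] (k : C(Y, E)) (h : C(Y, ℝ)) :
    ‖∫ y, h y • k y ∂μ‖ ≤ (∫ y, ‖k y‖ ∂μ) * ‖h‖ := by
  rw [← MeasureTheory.integral_mul_const]
  refine norm_integral_le_of_norm_le ((integrable_continuousMap μ k).norm.mul_const _)
    (.of_forall fun y => ?_)
  rw [norm_smul, mul_comm]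
  gcongr
  exact h.norm_coe_le_norm y

/-- The integral operator `h ↦ ∫ h y • k y ∂μ` with vector-valued continuous kernel `k`. For
`E = C(X, ℝ)` this is the operator with scalar kernel `(x, y) ↦ k y x`. -/
noncomputable def kernelOp (μ : Measure Y) [IsFiniteMeasure μ] (k : C(Y, E)) : C(Y, ℝ) →L[ℝ] E :=
  LinearMap.mkContinuous
    { toFun := fun h => ∫ y, h y • k y ∂μ
      map_add' := fun h₁ h₂ => by
        simp only [ContinuousMap.add_apply, add_smul]
        exact integral_add (integrable_continuousMap μ (h₁ • k))
          (integrable_continuousMap μ (h₂ • k))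
      map_smul' := fun c h => by
        simp only [ContinuousMap.smul_apply, smul_assoc, MeasureTheory.integral_smul,
          RingHom.id_apply] }
    (∫ y, ‖k y‖ ∂μ) (norm_integral_smul_le μ k)

variable (μ : Measure Y) [IsFiniteMeasure μ] (k : C(Y, E))

lemma kernelOp_apply (h : C(Y, ℝ)) : kernelOp μ k h = ∫ y, h y • k y ∂μ := rfl

lemma norm_kernelOp_le : ‖kernelOp μ k‖ ≤ ∫ y, ‖k y‖ ∂μ :=
  LinearMap.mkContinuous_norm_le _ (integral_nonneg fun _ => norm_nonneg _) _

lemma comp_kernelOp [CompleteSpace E] [CompleteSpace F] (ℓ : E →L[ℝ] F) :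
    ℓ.comp (kernelOp μ k) = kernelOp μ ((ℓ : C(E, F)).comp k) := by
  ext h
  have hℓ := ℓ.integral_comp_comm (integrable_continuousMap μ (h • k))
  simpa [kernelOp_apply] using hℓ.symm

lemma norm_kernelOp_continuousMap_le {X : Type*} [TopologicalSpace X] [CompactSpace X]
    [Nonempty X] (k : C(Y, C(X, ℝ))) {C : ℝ} (hC : ∀ x, ∫ y, |k y x| ∂μ ≤ C) :
    ‖kernelOp μ k‖ ≤ C := by
  have hC₀ : 0 ≤ C := (integral_nonneg fun _ => abs_nonneg _).trans (hC (Classical.arbitrary X))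
  refine ContinuousLinearMap.opNorm_le_bound _ hC₀ fun h =>
    (ContinuousMap.norm_le _ (by positivity)).2 fun x => ?_
  have heval := comp_kernelOp μ k (ContinuousMap.evalCLM ℝ x)
  calc ‖kernelOp μ k h x‖ = ‖(ContinuousMap.evalCLM ℝ x).comp (kernelOp μ k) h‖ := rfl
    _ ≤ C * ‖h‖ := by
      rw [heval]
      exact ContinuousLinearMap.le_of_opNorm_le _ ((norm_kernelOp_le μ _).trans (hC x)) h

end KernelOperator

section Taylor

variable {E : Type*} [NormedAddCommGroup E] [NormedSpace ℝ E]

lemma iteratedDerivWithin_of_subset {s t : Set ℝ} {n : ℕ} {f : ℝ → E} {x : ℝ} (hst : s ⊆ t)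
    (hs : UniqueDiffOn ℝ s) (ht : UniqueDiffOn ℝ t) (hf : ContDiffOn ℝ n f t) (hx : x ∈ s) :
    iteratedDerivWithin n f s x = iteratedDerivWithin n f t x := by
  simp only [iteratedDerivWithin, iteratedFDerivWithin_subset hst hs ht hf hx]

lemma iteratedDerivWithin_iteratedDerivWithin (s : Set ℝ) (j k : ℕ) (f : ℝ → E) :
    iteratedDerivWithin k (iteratedDerivWithin j f s) s = iteratedDerivWithin (k + j) f s := by
  induction k with
  | zero => simp
  | succ k ih => rw [iteratedDerivWithin_succ, ih, ← iteratedDerivWithin_succ, Nat.succ_add]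

lemma contDiffOn_iteratedDerivWithin {s : Set ℝ} (hs : UniqueDiffOn ℝ s) {j n : ℕ} {f : ℝ → E}
    (hf : ContDiffOn ℝ (n + j : ℕ) f s) : ContDiffOn ℝ n (iteratedDerivWithin j f s) s := by
  induction j generalizing n with
  | zero => simpa using hf
  | succ j ih =>
    rw [iteratedDerivWithin_succ]
    exact (ih (n := n + 1) (by rwa [Nat.succ_add_eq_add_succ])).derivWithin hs (by simp)

lemma eq_taylor_sum_add_integral [CompleteSpace E] {f : ℝ → E} {a b t : ℝ} {n : ℕ} (hab : a < b)
    (hf : ContDiffOn ℝ (n + 1 : ℕ) f (Icc a b)) (ht : t ∈ Icc a b) :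
    f t = ∑ k ∈ Finset.range (n + 1),
        ((k ! : ℝ)⁻¹ * (t - a) ^ k) • iteratedDerivWithin k f (Icc a b) a
      + ∫ s in a..t, ((t - s) ^ n / n !) • iteratedDerivWithin (n + 1) f (Icc a b) s := by
  rcases ht.1.eq_or_lt with rfl | hat
  · simp [Finset.sum_range_succ']
  have hsub : Icc a t ⊆ Icc a b := Icc_subset_Icc_right ht.2
  have hderiv : ∀ k ≤ n + 1, ∀ s ∈ Icc a t,
      iteratedDerivWithin k f (Icc a t) s = iteratedDerivWithin k f (Icc a b) s := fun k hk s hs =>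
    iteratedDerivWithin_of_subset hsub (uniqueDiffOn_Icc hat) (uniqueDiffOn_Icc hab)
      (hf.of_le (mod_cast hk)) hs
  have htaylor := taylor_integral_remainder (x₀ := a) (x := t) (n := n) (f := f)
    (by rw [uIcc_of_le hat.le]; exact hf.mono hsub)
  rw [uIcc_of_le hat.le, taylor_within_apply (E := E), sub_eq_iff_eq_add'] at htaylor
  rw [htaylor]
  congr 1
  · refine Finset.sum_congr rfl fun k hk => ?_
    rw [hderiv k (Finset.mem_range.1 hk).le a (left_mem_Icc.2 hat.le)]
  · refine integral_congr fun s hs => ?_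
    rw [uIcc_of_le hat.le] at hs
    simp only [hderiv (n + 1) le_rfl s hs]

lemma iteratedDerivWithin_eq_taylor_sum_add_integral [CompleteSpace E] {f : ℝ → E} {a b t : ℝ}
    {j n : ℕ} (hab : a < b) (hf : ContDiffOn ℝ (n + 1 + j : ℕ) f (Icc a b)) (ht : t ∈ Icc a b) :
    iteratedDerivWithin j f (Icc a b) t = ∑ k ∈ Finset.range (n + 1),
        ((k ! : ℝ)⁻¹ * (t - a) ^ k) • iteratedDerivWithin (k + j) f (Icc a b) a
      + ∫ s in a..t, ((t - s) ^ n / n !) • iteratedDerivWithin (n + 1 + j) f (Icc a b) s := by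
  simpa only [iteratedDerivWithin_iteratedDerivWithin] using
    eq_taylor_sum_add_integral hab (contDiffOn_iteratedDerivWithin (uniqueDiffOn_Icc hab) hf) ht

lemma exists_contDiff_iteratedDeriv_eq [CompleteSpace E] (n : ℕ) (c : ℕ → E) {h : ℝ → E}
    (hh : Continuous h) (a : ℝ) :
    ∃ u : ℝ → E, ContDiff ℝ n u ∧ (∀ k < n, iteratedDeriv k u a = c k) ∧ iteratedDeriv n u = h := by
  induction n generalizing c with
  | zero => exact ⟨h, by simpa using (contDiff_zero (𝕜 := ℝ)).2 hh, by simp, by simp⟩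
  | succ n ih =>
    obtain ⟨v, hv, hvc, hvh⟩ := ih fun k => c (k + 1)
    let u : ℝ → E := fun t => c 0 + ∫ s in a..t, v s
    have hu : ∀ t, HasDerivAt u (v t) t := fun t =>
      (hv.continuous.integral_hasStrictDerivAt a t).hasDerivAt.const_add _
    have hderiv : deriv u = v := funext fun t => (hu t).deriv
    refine ⟨u, ?_, fun k hk => ?_, ?_⟩
    · push_cast
      exact contDiff_succ_iff_deriv.2
        ⟨fun t => (hu t).differentiableAt, by simp, by rwa [hderiv]⟩
    · cases k with
      | zero => simp [u]
      | succ k => rw [iteratedDeriv_succ', hderiv, hvc k (by omega)]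
    · rw [iteratedDeriv_succ', hderiv, hvh]

end Taylor

section Green

lemma G_eq_max (t s : ℝ) : G t s = (t ^ 5 * (1 - s) ^ 3 - (max (t - s) 0) ^ 5) / 120 := by
  unfold G
  split_ifs with h
  · rw [max_eq_left (by linarith)]
  · rw [max_eq_right (by linarith)]; ring

@[fun_prop]
lemma continuous_G {X : Type*} [TopologicalSpace X] {x y : X → ℝ} (hx : Continuous x)
    (hy : Continuous y) : Continuous fun z => G (x z) (y z) := by
  simp only [G_eq_max]
  fun_prop

lemma integral_max_sub_zero_pow_mul {h : ℝ → ℝ} {a b t : ℝ} {n : ℕ} (hn : n ≠ 0)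
    (hh : IntervalIntegrable h volume a b) (ht : t ∈ Icc a b) :
    ∫ s in a..b, max (t - s) 0 ^ n * h s = ∫ s in a..t, (t - s) ^ n * h s := by
  have ht' : t ∈ uIcc a b := Icc_subset_uIcc ht
  have hcont : Continuous fun s => max (t - s) 0 ^ n := by fun_prop
  have hleft : ∫ s in a..t, max (t - s) 0 ^ n * h s = ∫ s in a..t, (t - s) ^ n * h s :=
    integral_congr fun s hs => by
      rw [uIcc_of_le ht.1] at hs
      simp only [max_eq_left (sub_nonneg.2 hs.2)]
  have hright : ∫ s in t..b, max (t - s) 0 ^ n * h s = 0 :=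
    integral_zero_ae <| .of_forall fun s hs => by
      rw [uIoc_of_le ht.2] at hs
      rw [max_eq_right (sub_nonpos.2 hs.1.le), zero_pow hn, zero_mul]
  rw [← integral_add_adjacent_intervals
    ((hh.mono_set (uIcc_subset_uIcc_left ht')).continuousOn_mul hcont.continuousOn)
    ((hh.mono_set (uIcc_subset_uIcc_right ht')).continuousOn_mul hcont.continuousOn),
    hleft, hright, add_zero]

lemma integral_G_mul {h : ℝ → ℝ} (hh : IntervalIntegrable h volume 0 1) {t : ℝ}
    (ht : t ∈ Icc (0 : ℝ) 1) :
    ∫ s in (0 : ℝ)..1, G t s * h s =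
      t ^ 5 / 120 * (∫ s in (0 : ℝ)..1, (1 - s) ^ 3 * h s)
        - (∫ s in (0 : ℝ)..t, (t - s) ^ 5 * h s) / 120 := by
  have hint : ∀ {w : ℝ → ℝ}, Continuous w → IntervalIntegrable (fun s => w s * h s) volume 0 1 :=
    fun hw => hh.continuousOn_mul hw.continuousOn
  rw [← integral_max_sub_zero_pow_mul (by norm_num) hh ht, ← intervalIntegral.integral_const_mul,
    ← intervalIntegral.integral_div,
    ← intervalIntegral.integral_sub ((hint (by fun_prop)).const_mul _)
      ((hint (by fun_prop)).div_const _)]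
  refine integral_congr fun s _ => ?_
  simp only [G_eq_max]
  ring

lemma max_sub_zero_le_mul_one_sub {t s : ℝ} (ht : t ∈ Icc (0 : ℝ) 1) (hs : s ∈ Icc (0 : ℝ) 1) :
    max (t - s) 0 ≤ t * (1 - s) :=
  max_le (by nlinarith [ht.2, hs.1]) (mul_nonneg ht.1 (sub_nonneg.2 hs.2))

lemma G_nonneg {t s : ℝ} (ht : t ∈ Icc (0 : ℝ) 1) (hs : s ∈ Icc (0 : ℝ) 1) : 0 ≤ G t s := by
  have ht₀ := ht.1
  have hs₀ : 0 ≤ 1 - s := sub_nonneg.2 hs.2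
  have hle : max (t - s) 0 ^ 5 ≤ t ^ 5 * (1 - s) ^ 3 := calc
    max (t - s) 0 ^ 5 ≤ (t * (1 - s)) ^ 5 := by
      gcongr
      exact max_sub_zero_le_mul_one_sub ht hs
    _ = t ^ 5 * (1 - s) ^ 5 := mul_pow _ _ _
    _ ≤ t ^ 5 * (1 - s) ^ 3 := by
      gcongr ?_ * ?_
      exact pow_le_pow_of_le_one hs₀ (by linarith [hs.1]) (by norm_num)
  rw [G_eq_max]
  linarith

lemma G_le_G_one {t s : ℝ} (ht : t ∈ Icc (0 : ℝ) 1) (hs : s ∈ Icc (0 : ℝ) 1) : G t s ≤ G 1 s := by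
  have ht₀ := ht.1
  have hs₀ : 0 ≤ 1 - s := sub_nonneg.2 hs.2
  set r := max (t - s) 0 with hr
  have hrt : r ≤ t * (1 - s) := max_sub_zero_le_mul_one_sub ht hs
  have hgap : 1 - s - r ≤ 1 - t := by linarith [le_max_left (t - s) 0]
  have hr₁ : 0 ≤ 1 - s - r := by nlinarith [ht.2]
  -- Factor `(1 - s) ^ 5 - r ^ 5`, so that `(1 - t) * ∑ i < 5, t ^ i = 1 - t ^ 5` can be used.
  have hkey : (1 - s) ^ 5 - r ^ 5 ≤ (1 - t ^ 5) * (1 - s) ^ 3 := calc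
    (1 - s) ^ 5 - r ^ 5 = (∑ i ∈ Finset.range 5, r ^ i * (1 - s) ^ (4 - i)) * (1 - s - r) := by
      simp only [Finset.sum_range_succ, Finset.sum_range_zero]; ring
    _ ≤ (∑ i ∈ Finset.range 5, (t * (1 - s)) ^ i * (1 - s) ^ (4 - i)) * (1 - t) := by
      gcongr
    _ = (1 - t ^ 5) * (1 - s) ^ 4 := by
      simp only [Finset.sum_range_succ, Finset.sum_range_zero]; ring
    _ ≤ (1 - t ^ 5) * (1 - s) ^ 3 := by
      gcongr ?_ * ?_
      · exact sub_nonneg.2 (pow_le_one₀ ht.1 ht.2)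
      · exact pow_le_pow_of_le_one hs₀ (by linarith [hs.1]) (by norm_num)
  rw [G_eq_max, G_eq_max, max_eq_left hs₀, ← hr]
  linarith

end Green

section LinearBVP

/-- `u` is a `C⁶` solution on `[0, 1]` of the linear problem `u⁽⁶⁾ + h = 0` with the homogeneous
boundary conditions at `0` and `1` and the prescribed value `u 0 = c`. The nonlinear nonlocal
problem is the case where `h` and `c` are themselves computed from `u`. -/
def SolvesBVP (h : ℝ → ℝ) (c : ℝ) (u : ℝ → ℝ) : Prop :=
  ContDiffOn ℝ 6 u (Icc 0 1) ∧
    (∀ t ∈ Ioo (0 : ℝ) 1, iteratedDerivWithin 6 u (Icc 0 1) t + h t = 0) ∧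
    iteratedDerivWithin 1 u (Icc 0 1) 0 = 0 ∧
    iteratedDerivWithin 2 u (Icc 0 1) 0 = 0 ∧
    iteratedDerivWithin 3 u (Icc 0 1) 0 = 0 ∧
    iteratedDerivWithin 4 u (Icc 0 1) 0 = 0 ∧
    iteratedDerivWithin 2 u (Icc 0 1) 1 = 0 ∧
    u 0 = c

variable {h h' u u' : ℝ → ℝ} {c : ℝ}

lemma SolvesBVP.congr (hu : SolvesBVP h c u) (hh : EqOn h' h (Icc 0 1))
    (huu : EqOn u' u (Icc 0 1)) : SolvesBVP h' c u' := by
  obtain ⟨hC, hode, h1, h2, h3, h4, h21, h0⟩ := hu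
  have hderiv : ∀ k, EqOn (iteratedDerivWithin k u' (Icc 0 1)) (iteratedDerivWithin k u (Icc 0 1))
      (Icc 0 1) := fun k => iteratedDerivWithin_congr huu
  have hz : (0 : ℝ) ∈ Icc (0 : ℝ) 1 := left_mem_Icc.2 zero_le_one
  have ho : (1 : ℝ) ∈ Icc (0 : ℝ) 1 := right_mem_Icc.2 zero_le_one
  refine ⟨hC.congr huu, fun t ht => ?_, ?_, ?_, ?_, ?_, ?_, ?_⟩
  · rw [hderiv 6 (Ioo_subset_Icc_self ht), hh (Ioo_subset_Icc_self ht), hode t ht]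
  all_goals simp only [hderiv _ hz, hderiv _ ho, huu hz, *]

lemma SolvesBVP.iteratedDerivWithin_six (hu : SolvesBVP h c u) (hh : ContinuousOn h (Icc 0 1)) :
    EqOn (iteratedDerivWithin 6 u (Icc 0 1)) (fun t => -h t) (Icc 0 1) := by
  have hcont : ContinuousOn (iteratedDerivWithin 6 u (Icc 0 1)) (Icc 0 1) :=
    hu.1.continuousOn_iteratedDerivWithin le_rfl (uniqueDiffOn_Icc zero_lt_one)
  refine EqOn.of_subset_closure (fun t ht => eq_neg_of_add_eq_zero_left (hu.2.1 t ht)) hcont hh.neg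
    Ioo_subset_Icc_self ?_
  rw [closure_Ioo zero_ne_one]

lemma integral_smul_iteratedDerivWithin_six {t : ℝ} (n : ℕ) (ht : t ∈ Icc (0 : ℝ) 1)
    (h6 : EqOn (iteratedDerivWithin 6 u (Icc 0 1)) (fun s => -h s) (Icc 0 1)) :
    ∫ s in (0 : ℝ)..t, ((t - s) ^ n / n !) • iteratedDerivWithin 6 u (Icc 0 1) s =
      -(∫ s in (0 : ℝ)..t, (t - s) ^ n * h s) / n ! := by
  rw [← intervalIntegral.integral_neg, ← intervalIntegral.integral_div]
  refine integral_congr fun s hs => ?_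
  rw [uIcc_of_le ht.1] at hs
  simp only [h6 ⟨hs.1, hs.2.trans ht.2⟩, smul_eq_mul]
  ring

lemma iteratedDerivWithin_two_one_eq (hu : ContDiffOn ℝ 6 u (Icc 0 1))
    (h2 : iteratedDerivWithin 2 u (Icc 0 1) 0 = 0) (h3 : iteratedDerivWithin 3 u (Icc 0 1) 0 = 0)
    (h4 : iteratedDerivWithin 4 u (Icc 0 1) 0 = 0)
    (h6 : EqOn (iteratedDerivWithin 6 u (Icc 0 1)) (fun s => -h s) (Icc 0 1)) :
    iteratedDerivWithin 2 u (Icc 0 1) 1 =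
      (iteratedDerivWithin 5 u (Icc 0 1) 0 - ∫ s in (0 : ℝ)..1, (1 - s) ^ 3 * h s) / 6 := by
  have hone : (1 : ℝ) ∈ Icc (0 : ℝ) 1 := right_mem_Icc.2 zero_le_one
  have hpoly : ∑ k ∈ Finset.range 4,
      ((k ! : ℝ)⁻¹ * (1 - 0) ^ k) • iteratedDerivWithin (k + 2) u (Icc 0 1) 0 =
        iteratedDerivWithin 5 u (Icc 0 1) 0 / 6 := by
    simp [Finset.sum_range_succ, h2, h3, h4, Nat.factorial, div_eq_inv_mul]
  rw [iteratedDerivWithin_eq_taylor_sum_add_integral (n := 3) zero_lt_one hu hone, hpoly,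
    integral_smul_iteratedDerivWithin_six 3 hone h6, sub_div, neg_div, ← sub_eq_add_neg]
  norm_num [Nat.factorial]

lemma SolvesBVP.iteratedDerivWithin_five (hu : SolvesBVP h c u) (hh : ContinuousOn h (Icc 0 1)) :
    iteratedDerivWithin 5 u (Icc 0 1) 0 = ∫ s in (0 : ℝ)..1, (1 - s) ^ 3 * h s := by
  have h6 := hu.iteratedDerivWithin_six hh
  obtain ⟨hC, -, -, h2, h3, h4, h21, -⟩ := hu
  linarith [iteratedDerivWithin_two_one_eq hC h2 h3 h4 h6]

lemma SolvesBVP.eqOn_add_integral_G (hu : SolvesBVP h c u) (hh : ContinuousOn h (Icc 0 1)) :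
    EqOn u (fun t => c + ∫ s in (0 : ℝ)..1, G t s * h s) (Icc 0 1) := by
  intro t ht
  have h5 := hu.iteratedDerivWithin_five hh
  have h6 := hu.iteratedDerivWithin_six hh
  obtain ⟨hC, -, h1, h2, h3, h4, -, h0⟩ := hu
  have hpoly : ∑ k ∈ Finset.range 6,
      ((k ! : ℝ)⁻¹ * (t - 0) ^ k) • iteratedDerivWithin k u (Icc 0 1) 0 =
        c + t ^ 5 / 120 * ∫ s in (0 : ℝ)..1, (1 - s) ^ 3 * h s := by
    simp [Finset.sum_range_succ, h0, h1, h2, h3, h4, h5, Nat.factorial, div_eq_inv_mul]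
  calc u t = _ := eq_taylor_sum_add_integral (n := 5) zero_lt_one hC ht
    _ = c + ∫ s in (0 : ℝ)..1, G t s * h s := by
      rw [hpoly, integral_smul_iteratedDerivWithin_six 5 ht h6,
        integral_G_mul (hh.intervalIntegrable_of_Icc zero_le_one) ht]
      norm_num [Nat.factorial]
      ring

lemma exists_solvesBVP (hh : ContinuousOn h (Icc 0 1)) (c : ℝ) : ∃ u, SolvesBVP h c u := by
  let d : ℕ → ℝ
    | 0 => c
    -- the value for which `u″(1) = 0`, by `iteratedDerivWithin_two_one_eq`
    | 5 => ∫ s in (0 : ℝ)..1, (1 - s) ^ 3 * h s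
    | _ => 0
  have hext : Continuous (IccExtend (zero_le_one' ℝ) ((Icc (0 : ℝ) 1).domRestrict h)) :=
    hh.domRestrict.Icc_extend'
  obtain ⟨u, hu, hud, hu6⟩ := exists_contDiff_iteratedDeriv_eq 6 d hext.neg 0
  have hderiv : ∀ k ≤ 6, ∀ t ∈ Icc (0 : ℝ) 1,
      iteratedDerivWithin k u (Icc 0 1) t = iteratedDeriv k u t := fun k hk t ht =>
    iteratedDerivWithin_eq_iteratedDeriv (uniqueDiffOn_Icc zero_lt_one)
      (hu.of_le (mod_cast hk)).contDiffAt ht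
  have hzero : ∀ k < 6, iteratedDerivWithin k u (Icc 0 1) 0 = d k := fun k hk => by
    rw [hderiv k hk.le 0 (left_mem_Icc.2 zero_le_one), hud k hk]
  have h6 : EqOn (iteratedDerivWithin 6 u (Icc 0 1)) (fun t => -h t) (Icc 0 1) := fun t ht => by
    rw [hderiv 6 le_rfl t ht, hu6]
    simp [IccExtend_of_mem _ _ ht, domRestrict_apply]
  have hu' : ContDiffOn ℝ 6 u (Icc 0 1) := hu.contDiffOn
  refine ⟨u, hu', fun t ht => ?_, hzero 1 (by norm_num), hzero 2 (by norm_num),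
    hzero 3 (by norm_num), hzero 4 (by norm_num), ?_, ?_⟩
  · rw [h6 (Ioo_subset_Icc_self ht), neg_add_cancel]
  · rw [iteratedDerivWithin_two_one_eq hu' (hzero 2 (by norm_num)) (hzero 3 (by norm_num))
      (hzero 4 (by norm_num)) h6, hzero 5 (by norm_num)]
    simp [d]
  · simpa [d] using hzero 0 (by norm_num)

theorem solvesBVP_iff (hh : ContinuousOn h (Icc 0 1)) :
    SolvesBVP h c u ↔ EqOn u (fun t => c + ∫ s in (0 : ℝ)..1, G t s * h s) (Icc 0 1) := by
  refine ⟨fun hu => hu.eqOn_add_integral_G hh, fun hu => ?_⟩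
  obtain ⟨u₀, hu₀⟩ := exists_solvesBVP hh c
  exact hu₀.congr (eqOn_refl h _) (hu.trans (hu₀.eqOn_add_integral_G hh).symm)

end LinearBVP

section GreenOperator

/-- The `Lᵖ` norm of `g` on `[0, 1]`. -/
noncomputable def unitLpNorm (p : ℝ) (g : ℝ → ℝ) : ℝ := (∫ s in (0 : ℝ)..1, |g s| ^ p) ^ (1 / p)

lemma integral_unitInterval (g : ℝ → ℝ) : ∫ s : I, g s = ∫ s in (0 : ℝ)..1, g s := by
  rw [integral_subtype measurableSet_Icc, integral_Icc_eq_integral_Ioc, integral_of_le zero_le_one]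

lemma integral_abs_le_unitLpNorm {k : C(I, ℝ)} {g : ℝ → ℝ} (hg : ∀ s : I, k s = g s) {p : ℝ}
    (hp : 1 ≤ p) : ∫ s, |k s| ≤ unitLpNorm p g := by
  have hle := integral_norm_le_rpow_integral_norm_rpow volume k hp
  simpa only [unitLpNorm, hg, Real.norm_eq_abs, integral_unitInterval fun s => |g s| ^ p] using hle

/-- Green's function as the continuous kernel `s ↦ G(·, s)` with values in `C[0, 1]`. -/
noncomputable def greenKernel : C(I, C(I, ℝ)) :=
  ContinuousMap.curry ⟨fun q : I × I => G q.2 q.1, by fun_prop⟩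

/-- The Green operator `h ↦ ∫₀¹ G(·, s) h(s) ds` on `C[0, 1]`. -/
noncomputable def greenOp : C(I, ℝ) →L[ℝ] C(I, ℝ) := kernelOp volume greenKernel

lemma greenKernel_apply (s t : I) : greenKernel s t = G t s := rfl

lemma greenOp_apply {k : C(I, ℝ)} {h : ℝ → ℝ} (hk : ∀ s : I, k s = h s) (t : I) :
    greenOp k t = ∫ s in (0 : ℝ)..1, G t s * h s := by
  have hcomp := comp_kernelOp volume greenKernel (ContinuousMap.evalCLM ℝ t)
  calc greenOp k t = ∫ s : I, k s * G t s := DFunLike.congr_fun hcomp k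
    _ = ∫ s : I, G t s * h s := by simp only [hk, mul_comm]
    _ = _ := integral_unitInterval fun s => G t s * h s

lemma norm_comp_greenOp_le {ℓ : C(I, ℝ) →L[ℝ] ℝ} {g : ℝ → ℝ} (hg : ∀ s : I, ℓ (greenKernel s) = g s)
    {p : ℝ} (hp : 1 ≤ p) : ‖ℓ.comp greenOp‖ ≤ unitLpNorm p g := by
  rw [greenOp, comp_kernelOp]
  exact (norm_kernelOp_le _ _).trans (integral_abs_le_unitLpNorm hg hp)

lemma norm_greenOp_le {p : ℝ} (hp : 1 ≤ p) : ‖greenOp‖ ≤ unitLpNorm p (G 1) := by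
  have hcont : ∀ t : I, Continuous fun s : I => G t s := fun t => by fun_prop
  have hint : ∀ t : I, Integrable fun s : I => |G t s| := fun t =>
    (integrable_continuousMap volume ⟨_, hcont t⟩).abs
  refine norm_kernelOp_continuousMap_le volume greenKernel fun t => ?_
  calc ∫ s : I, |G t s| ≤ ∫ s : I, |G 1 s| :=
        integral_mono (hint t) (hint 1) fun s =>
          abs_le_abs_of_nonneg (G_nonneg t.2 s.2) (G_le_G_one t.2 s.2)
    _ ≤ unitLpNorm p (G 1) := integral_abs_le_unitLpNorm (k := ⟨_, hcont 1⟩) (fun _ => rfl) hp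

lemma solvesBVP_iff_eq_smul_add {h u : ℝ → ℝ} {k w : C(I, ℝ)} (hk : ∀ t : I, k t = h t)
    (hw : ∀ t : I, w t = u t) (c : ℝ) : SolvesBVP h c u ↔ w = c • 1 + greenOp k := by
  have hh : ContinuousOn h (Icc 0 1) :=
    continuousOn_iff_continuous_domRestrict.2 (k.continuous.congr hk)
  simp only [solvesBVP_iff hh, ContinuousMap.ext_iff, EqOn, ContinuousMap.add_apply,
    ContinuousMap.smul_apply, ContinuousMap.one_apply, greenOp_apply hk, hw, smul_eq_mul, mul_one,
    Subtype.forall]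

end GreenOperator

section Multipoint

/-- The functional `w ↦ ∫ x in a..b, w x` on `C[0, 1]`, where `w` is extended to `ℝ` by its values
at the endpoints. -/
noncomputable def intervalIntegralCLM (a b : ℝ) : C(I, ℝ) →L[ℝ] ℝ :=
  LinearMap.mkContinuous
    { toFun := fun w => ∫ x in a..b, IccExtend zero_le_one w x
      map_add' := fun w₁ w₂ =>
        intervalIntegral.integral_add (w₁.continuous.Icc_extend'.intervalIntegrable a b)
          (w₂.continuous.Icc_extend'.intervalIntegrable a b)
      map_smul' := fun c w => intervalIntegral.integral_smul c _ }
    |b - a| fun w => by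
      rw [mul_comm]
      exact intervalIntegral.norm_integral_le_of_norm_le_const fun x _ => w.norm_coe_le_norm _

lemma intervalIntegralCLM_apply {a b : ℝ} (ha : a ∈ Icc (0 : ℝ) 1) (hb : b ∈ Icc (0 : ℝ) 1)
    {w : C(I, ℝ)} {u : ℝ → ℝ} (hw : ∀ t : I, w t = u t) :
    intervalIntegralCLM a b w = ∫ x in a..b, u x :=
  integral_congr fun x hx => by
    have hx' : x ∈ Icc (0 : ℝ) 1 := uIcc_subset_Icc ha hb hx
    simp only [IccExtend_of_mem _ _ hx', hw]

/-- Evaluation at the point of `[0, 1]` nearest to `x`, as a functional on `C[0, 1]`. -/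
noncomputable def evalProjCLM (x : ℝ) : C(I, ℝ) →L[ℝ] ℝ :=
  ContinuousMap.evalCLM ℝ (projIcc 0 1 zero_le_one x)

lemma evalProjCLM_apply {x : ℝ} (hx : x ∈ Icc (0 : ℝ) 1) {w : C(I, ℝ)} {u : ℝ → ℝ}
    (hw : ∀ t : I, w t = u t) : evalProjCLM x w = u x := by
  simp [evalProjCLM, hw, projIcc_of_mem zero_le_one hx]

variable {ι κ : Type*} (S : Finset ι) (T : Finset κ) (α a b : ι → ℝ) (β ξ : κ → ℝ)

/-- The right-hand side of the multipoint and multi-term integral boundary condition, with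
subintervals from `a i` to `b i` and nodes `ξ j`. -/
noncomputable def multipointValue (u : ℝ → ℝ) : ℝ :=
  ∑ i ∈ S, α i * (∫ x in a i..b i, u x) + ∑ j ∈ T, β j * u (ξ j)

/-- `multipointValue` as a continuous linear functional on `C[0, 1]`. -/
noncomputable def multipointCLM : C(I, ℝ) →L[ℝ] ℝ :=
  ∑ i ∈ S, α i • intervalIntegralCLM (a i) (b i) + ∑ j ∈ T, β j • evalProjCLM (ξ j)

variable {S T a b ξ}

lemma multipointCLM_apply (ha : ∀ i ∈ S, a i ∈ Icc (0 : ℝ) 1) (hb : ∀ i ∈ S, b i ∈ Icc (0 : ℝ) 1)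
    (hξ : ∀ j ∈ T, ξ j ∈ Icc (0 : ℝ) 1) {w : C(I, ℝ)} {u : ℝ → ℝ} (hw : ∀ t : I, w t = u t) :
    multipointCLM S T α a b β ξ w = multipointValue S T α a b β ξ u := by
  simp only [multipointCLM, multipointValue, add_apply, sum_apply, smul_apply, smul_eq_mul]
  congr 1 <;> refine Finset.sum_congr rfl fun i hi => ?_
  · rw [intervalIntegralCLM_apply (ha i hi) (hb i hi) hw]
  · rw [evalProjCLM_apply (hξ i hi) hw]

lemma multipointCLM_one (ha : ∀ i ∈ S, a i ∈ Icc (0 : ℝ) 1) (hb : ∀ i ∈ S, b i ∈ Icc (0 : ℝ) 1)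
    (hξ : ∀ j ∈ T, ξ j ∈ Icc (0 : ℝ) 1) :
    multipointCLM S T α a b β ξ 1 = ∑ i ∈ S, α i * (b i - a i) + ∑ j ∈ T, β j := by
  rw [multipointCLM_apply α β ha hb hξ (u := fun _ => 1) fun _ => rfl]
  simp [multipointValue]

lemma norm_multipointCLM_comp_greenOp_le (ha : ∀ i ∈ S, a i ∈ Icc (0 : ℝ) 1)
    (hb : ∀ i ∈ S, b i ∈ Icc (0 : ℝ) 1) (hξ : ∀ j ∈ T, ξ j ∈ Icc (0 : ℝ) 1) {p : ℝ} (hp : 1 ≤ p) :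
    ‖(multipointCLM S T α a b β ξ).comp greenOp‖ ≤
      ∑ i ∈ S, |α i| * unitLpNorm p (fun s => ∫ τ in a i..b i, G τ s)
        + ∑ j ∈ T, |β j| * unitLpNorm p (G (ξ j)) := by
  refine (norm_sum_add_sum_comp_le S T α β _ _ greenOp).trans ?_
  gcongr with i hi j hj
  · exact norm_comp_greenOp_le
      (fun s => intervalIntegralCLM_apply (ha i hi) (hb i hi) (greenKernel_apply s)) hp
  · exact norm_comp_greenOp_le
      (fun s => evalProjCLM_apply (u := fun t => G t s) (hξ j hj) (greenKernel_apply s)) hp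

end Multipoint

theorem unique_solution_general {ι κ : Type*} {S : Finset ι} {T : Finset κ} {α a b : ι → ℝ}
    {β ξ : κ → ℝ} (ha : ∀ i ∈ S, a i ∈ Icc (0 : ℝ) 1) (hb : ∀ i ∈ S, b i ∈ Icc (0 : ℝ) 1)
    (hξ : ∀ j ∈ T, ξ j ∈ Icc (0 : ℝ) 1) {μ : ℝ}
    (hμdef : μ = 1 - (∑ i ∈ S, α i * (b i - a i) + ∑ j ∈ T, β j)) (hμ : μ ≠ 0) {f : ℝ → ℝ → ℝ}
    (hf : ContinuousOn (fun q : ℝ × ℝ => f q.1 q.2) (Icc (0 : ℝ) 1 ×ˢ univ)) {L : ℝ}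
    (hLip : ∀ t ∈ Icc (0 : ℝ) 1, ∀ u₁ u₂ : ℝ, |f t u₁ - f t u₂| ≤ L * |u₁ - u₂|) {p : ℝ}
    (hp : 1 ≤ p) {Φ : ℝ}
    (hΦ : Φ = unitLpNorm p (G 1)
        + (1 / |μ|) * ∑ i ∈ S, |α i| * unitLpNorm p (fun s => ∫ τ in a i..b i, G τ s)
        + (1 / |μ|) * ∑ j ∈ T, |β j| * unitLpNorm p (G (ξ j)))
    (hLΦ : L * Φ < 1) :
    ∃ u : ℝ → ℝ, SolvesBVP (fun t => f t (u t)) (multipointValue S T α a b β ξ u) u ∧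
      ∀ v : ℝ → ℝ, SolvesBVP (fun t => f t (v t)) (multipointValue S T α a b β ξ v) v →
        EqOn v u (Icc 0 1) := by
  have hL : 0 ≤ L := (abs_nonneg _).trans (by simpa using hLip 0 (by simp) 1 0)
  lift L to ℝ≥0 using hL
  have hfcont : Continuous fun q : I × ℝ => f q.1 q.2 :=
    hf.comp_continuous (f := fun q : I × ℝ => ((q.1 : ℝ), q.2)) (by fun_prop)
      fun q => ⟨q.1.2, trivial⟩
  let g : C(I × ℝ, ℝ) := ⟨_, hfcont⟩
  have hg : ∀ t, LipschitzWith L fun y => g (t, y) := fun t =>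
    LipschitzWith.of_dist_le_mul fun y₁ y₂ => hLip t t.2 y₁ y₂
  let ℓ := multipointCLM S T α a b β ξ
  have hμℓ : 1 - ℓ 1 = μ := by rw [hμdef, multipointCLM_one α β ha hb hξ]
  have hcontr : L * (‖greenOp‖ + ‖ℓ.comp greenOp‖ / |1 - ℓ 1| * ‖(1 : C(I, ℝ))‖) < 1 := by
    refine lt_of_le_of_lt ?_ hLΦ
    rw [hμℓ, norm_one, mul_one, hΦ, add_assoc, ← mul_add, one_div_mul_eq_div]
    gcongr
    · exact norm_greenOp_le hp
    · exact norm_multipointCLM_comp_greenOp_le α β ha hb hξ hp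
  have hiff : ∀ {w : C(I, ℝ)} {u : ℝ → ℝ}, (∀ t : I, w t = u t) →
      (SolvesBVP (fun t => f t (u t)) (multipointValue S T α a b β ξ u) u ↔
        w = ℓ w • 1 + greenOp (superposition g w)) := fun {w u} hw => by
    rw [← multipointCLM_apply α β ha hb hξ hw]
    exact solvesBVP_iff_eq_smul_add (fun t => congrArg (f t) (hw t)) hw _
  have hℓ : ℓ 1 ≠ 1 := fun h₁ => hμ (by rw [← hμℓ, h₁, sub_self])
  obtain ⟨w, hw, huniq⟩ :=
    existsUnique_eq_smul_add hℓ greenOp (lipschitzWith_superposition hg) hcontr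
  have hext : ∀ t : I, w t = IccExtend zero_le_one w t := fun t => (IccExtend_val _ _ t).symm
  refine ⟨_, (hiff hext).2 hw, fun v hv t ht => ?_⟩
  let w' : C(I, ℝ) := ⟨_, hv.1.continuousOn.domRestrict⟩
  calc v t = w' ⟨t, ht⟩ := rfl
    _ = w ⟨t, ht⟩ := by rw [huniq w' ((hiff fun _ => rfl).1 hv)]
    _ = _ := hext ⟨t, ht⟩

lemma mem_Icc_of_le_succ {X : Type*} [Preorder X] {η : ℕ → X} {k m : ℕ} {x y : X}
    (hk : x ≤ η k) (hm : η m ≤ y) (hη : ∀ i, k ≤ i → i < m → η i ≤ η (i + 1)) {i : ℕ}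
    (hi : i ∈ Finset.Icc k m) : η i ∈ Icc x y := by
  have hmono : MonotoneOn η (Icc k m) :=
    monotoneOn_of_le_succ ordConnected_Icc fun i _ hi hi' => hη i hi.1 hi'.2
  obtain ⟨hki, him⟩ := Finset.mem_Icc.1 hi
  have hkm : k ≤ m := hki.trans him
  exact ⟨hk.trans (hmono ⟨le_rfl, hkm⟩ ⟨hki, him⟩ hki),
    (hmono ⟨hki, him⟩ ⟨hkm, le_rfl⟩ him).trans hm⟩

/-- **Existence and uniqueness** (via Rus's fixed point theorem): if `f` is Lipschitz in its
second variable with constant `L` and `L · Φ < 1`, then the sixth-order boundary value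
problem `u⁽⁶⁾ + f(t,u) = 0` with the multi-point and multi-term integral boundary
conditions has exactly one solution (unique as a function on `[0,1]`). -/
theorem unique_solution
    (m : ℕ) (hm : 2 ≤ m) (α β η : ℕ → ℝ)
    (hη0 : 0 < η 1) (hηm : η m ≤ 1)
    (hηmono : ∀ i, 1 ≤ i → i < m → η i < η (i + 1))
    (μ : ℝ)
    (hμdef : μ = 1 - ((∑ i ∈ Finset.Icc 1 (m - 1), α i * (η (i + 1) - η i)) +
      ∑ i ∈ Finset.Icc 1 m, β i))
    (hμ : μ ≠ 0)
    (f : ℝ → ℝ → ℝ)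
    (hf : ContinuousOn (fun q : ℝ × ℝ => f q.1 q.2) ((Icc (0 : ℝ) 1) ×ˢ (univ : Set ℝ)))
    (L : ℝ) (hL : 0 < L)
    (hLip : ∀ t ∈ Icc (0 : ℝ) 1, ∀ u₁ u₂ : ℝ, |f t u₁ - f t u₂| ≤ L * |u₁ - u₂|)
    (p : ℝ) (hp : 1 < p)
    (Φ : ℝ)
    (hΦ : Φ = (∫ s in (0 : ℝ)..1, |G 1 s| ^ p) ^ (1 / p)
        + (1 / |μ|) * ∑ i ∈ Finset.Icc 1 (m - 1),
            |α i| * (∫ s in (0 : ℝ)..1, |∫ τ in (η i)..(η (i + 1)), G τ s| ^ p) ^ (1 / p)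
        + (1 / |μ|) * ∑ i ∈ Finset.Icc 1 m,
            |β i| * (∫ s in (0 : ℝ)..1, |G (η i) s| ^ p) ^ (1 / p))
    (hLΦ : L * Φ < 1) :
    ∃ u : ℝ → ℝ,
      (ContDiffOn ℝ 6 u (Icc 0 1) ∧
        (∀ t ∈ Ioo (0 : ℝ) 1, iteratedDerivWithin 6 u (Icc 0 1) t + f t (u t) = 0) ∧
        iteratedDerivWithin 1 u (Icc 0 1) 0 = 0 ∧
        iteratedDerivWithin 2 u (Icc 0 1) 0 = 0 ∧
        iteratedDerivWithin 3 u (Icc 0 1) 0 = 0 ∧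
        iteratedDerivWithin 4 u (Icc 0 1) 0 = 0 ∧
        iteratedDerivWithin 2 u (Icc 0 1) 1 = 0 ∧
        u 0 = (∑ i ∈ Finset.Icc 1 (m - 1), α i * ∫ s in (η i)..(η (i + 1)), u s) +
          ∑ i ∈ Finset.Icc 1 m, β i * u (η i)) ∧
      ∀ v : ℝ → ℝ,
        (ContDiffOn ℝ 6 v (Icc 0 1) ∧
          (∀ t ∈ Ioo (0 : ℝ) 1, iteratedDerivWithin 6 v (Icc 0 1) t + f t (v t) = 0) ∧
          iteratedDerivWithin 1 v (Icc 0 1) 0 = 0 ∧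
          iteratedDerivWithin 2 v (Icc 0 1) 0 = 0 ∧
          iteratedDerivWithin 3 v (Icc 0 1) 0 = 0 ∧
          iteratedDerivWithin 4 v (Icc 0 1) 0 = 0 ∧
          iteratedDerivWithin 2 v (Icc 0 1) 1 = 0 ∧
          v 0 = (∑ i ∈ Finset.Icc 1 (m - 1), α i * ∫ s in (η i)..(η (i + 1)), v s) +
            ∑ i ∈ Finset.Icc 1 m, β i * v (η i)) →
        EqOn v u (Icc (0 : ℝ) 1) := by
  have hη : ∀ i ∈ Finset.Icc 1 m, η i ∈ Icc (0 : ℝ) 1 := fun i =>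
    mem_Icc_of_le_succ hη0.le hηm fun i h₁ him => (hηmono i h₁ him).le
  have hlast : ∀ i ∈ Finset.Icc 1 (m - 1), i ∈ Finset.Icc 1 m ∧ i + 1 ∈ Finset.Icc 1 m :=
    fun i hi => by simp only [Finset.mem_Icc] at hi ⊢; omega
  exact unique_solution_general (fun i hi => hη i (hlast i hi).1) (fun i hi => hη _ (hlast i hi).2)
    hη hμdef hμ hf hLip hp.le hΦ hLΦ
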